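/- Let N be a 3-connected matroid, representable over some field, with ground set E, |E| >= 4, and neither a wheel nor a whirl. Let F = (e_1, ..., e_n) be a fan of N, and let R be the set of rim elements of F. Then the local connectivity satisfies ⊓(R, E − F) = 1. -/

import Mathlib

open Matroid Set

universe u

variable {α : Type u}

namespace PaperDefs

/-- Deletion of a set of elements from a matroid. -/
def mdel (M : Matroid α) (D : Set α) : Matroid α := M ↾ (M.E \ D)

/-- Contraction of a set of elements in a matroid. -/
def mcon (M : Matroid α) (C : Set α) : Matroid α := (mdel M✶ C)✶

/-- A circuit: a minimal dependent set. -/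
def IsCircuit (M : Matroid α) (C : Set α) : Prop :=
  M.Dep C ∧ ∀ X, X ⊂ C → M.Indep X

/-- A triangle: a 3-element circuit. -/
def IsTriangle (M : Matroid α) (T : Set α) : Prop :=
  IsCircuit M T ∧ T.encard = 3

/-- A triad: a 3-element cocircuit. -/
def IsTriad (M : Matroid α) (T : Set α) : Prop := IsTriangle M✶ T

/-- The (extended natural number) rank of a set in a matroid: the supremum of the
cardinalities of its independent subsets. -/
noncomputable def erk (M : Matroid α) (X : Set α) : ℕ∞ :=
  ⨆ I ∈ {I : Set α | M.Indep I ∧ I ⊆ X}, I.encard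

/-- Two elements are connected if they are equal or lie in a common circuit. -/
def ConnTo (M : Matroid α) (e f : α) : Prop :=
  (e = f ∧ e ∈ M.E) ∨ ∃ C, IsCircuit M C ∧ e ∈ C ∧ f ∈ C

/-- A matroid is connected if its ground set is nonempty and every two of its elements
are connected. -/
def Conn (M : Matroid α) : Prop :=
  M.E.Nonempty ∧ ∀ e ∈ M.E, ∀ f ∈ M.E, ConnTo M e f

/-- A 2-separation of a matroid: a partition `(X, Y)` of the ground set with both sides
of size at least two and `r(X) + r(Y) - r(M) ≤ 1`. -/
def TwoSep (M : Matroid α) (X Y : Set α) : Prop :=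
  X ∪ Y = M.E ∧ Disjoint X Y ∧ 2 ≤ X.encard ∧ 2 ≤ Y.encard ∧
    erk M X + erk M Y ≤ erk M M.E + 1

/-- A matroid is 3-connected if it is connected and has no 2-separation. -/
def ThreeConn (M : Matroid α) : Prop :=
  Conn M ∧ ∀ X Y, ¬ TwoSep M X Y

/-- A matroid is 3-connected up to series and parallel sets if it is connected and, for
every 2-separation `(X, Y)`, `min {r X, r Y} = 1` or `min {r✶ X, r✶ Y} = 1`. -/
def ThreeConnUpToSP (M : Matroid α) : Prop :=
  Conn M ∧ ∀ X Y, TwoSep M X Y →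
    min (erk M X) (erk M Y) = 1 ∨ min (erk M✶ X) (erk M✶ Y) = 1

/-- `N` is a minor of `M`: it is obtained from `M` by contracting a set `C` and deleting
a disjoint set `D`. -/
def IsMinor (N M : Matroid α) : Prop :=
  ∃ C D, C ⊆ M.E ∧ D ⊆ M.E ∧ Disjoint C D ∧ N = mdel (mcon M C) D

/-- `M` is isomorphic to `N`: there is a bijection between the ground sets under which
independence corresponds. -/
def IsoTo (M N : Matroid α) : Prop :=
  ∃ f : α → α, Set.BijOn f M.E N.E ∧ ∀ I, I ⊆ M.E → (M.Indep I ↔ N.Indep (f '' I))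

/-- The cyclic interval `{i, i+1, ..., j-1}` in `ZMod r`. -/
def cycArc (r : ℕ) (i j : ZMod r) : Set (ZMod r) :=
  {k | ∃ m : ℕ, m < (j - i).val ∧ k = i + (m : ZMod r)}

/-- `M` is (isomorphic to) a rank-`r` wheel for some `r ≥ 2`, i.e. the cycle matroid of
the wheel graph with `r` spokes: there is a labelling of the ground set by spokes `s i`
and rim elements `w i` so that the circuits of `M` are precisely the rim together with
the sets consisting of two spokes and the rim elements of one of the two arcs joining
them. -/
def IsWheel (M : Matroid α) : Prop :=
  ∃ r : ℕ, 2 ≤ r ∧ ∃ s w : ZMod r → α,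
    Function.Injective (Sum.elim s w) ∧
    M.E = Set.range s ∪ Set.range w ∧
    ∀ C, IsCircuit M C ↔
      (C = Set.range w ∨
        ∃ i j : ZMod r, i ≠ j ∧ C = {s i, s j} ∪ w '' cycArc r i j)

/-- `M` is (isomorphic to) a rank-`r` whirl for some `r ≥ 2`: obtained from the rank-`r`
wheel by relaxing the rim circuit; its circuits are the two-spokes-plus-arc circuits of
the wheel together with the sets consisting of the whole rim and a single spoke. -/
def IsWhirl (M : Matroid α) : Prop :=
  ∃ r : ℕ, 2 ≤ r ∧ ∃ s w : ZMod r → α,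
    Function.Injective (Sum.elim s w) ∧
    M.E = Set.range s ∪ Set.range w ∧
    ∀ C, IsCircuit M C ↔
      ((∃ i : ZMod r, C = insert (s i) (Set.range w)) ∨
        ∃ i j : ZMod r, i ≠ j ∧ C = {s i, s j} ∪ w '' cycArc r i j)

/-- A triangle if `b = true`, a triad if `b = false`. -/
def TriOrTriad (M : Matroid α) (b : Bool) (T : Set α) : Prop :=
  cond b (IsTriangle M T) (IsTriad M T)

/-- The alternation pattern of a fan, recorded as a list: position `i` (zero-based)
carries a spoke element iff `fanBool b i = true`, where `b` records whether the first
triple of the fan is a triangle. -/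
def fanBool (b : Bool) (i : ℕ) : Bool := if i % 2 = 0 then b else !b

/-- `F` is a fan of `M` whose first triple is a triangle if `b = true` (so that the
first element is a spoke element) and a triad if `b = false`: a list of at least three
distinct elements of the ground set in which every three consecutive elements form
alternately triangles and triads. -/
def IsFanWith (M : Matroid α) (b : Bool) (F : List α) : Prop :=
  3 ≤ F.length ∧ F.Nodup ∧ (∀ x ∈ F, x ∈ M.E) ∧
  ∀ (l₁ : List α) (x y z : α) (l₂ : List α), F = l₁ ++ x :: y :: z :: l₂ →
    TriOrTriad M (fanBool b l₁.length) {x, y, z}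

/-- `F` is a fan of `M`. -/
def IsFan (M : Matroid α) (F : List α) : Prop := ∃ b, IsFanWith M b F

/-- `F` is consistent with `F'`: `F` is a (not necessarily contiguous) subsequence of
`F'` or of its reversal. -/
def Consistent (F F' : List α) : Prop := F.Sublist F' ∨ F.Sublist F'.reverse

/-- A finite family of lists is pairwise disjoint. -/
def PairwiseDisjointLists (𝓕 : Finset (List α)) : Prop :=
  ∀ F ∈ 𝓕, ∀ G ∈ 𝓕, F ≠ G → ∀ x ∈ F, x ∉ G

/-- `𝓕` is a covering family of `M'` relative to `N` and `FN`: a family of pairwise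
disjoint fans of `M'`, of the same size as `FN`, such that every fan of `FN` is
consistent with a member of `𝓕` and every element of `E(M') - E(N)` lies in a member
of `𝓕`. -/
def CoveringFamily (N : Matroid α) (FN : Finset (List α)) (M' : Matroid α)
    (𝓕 : Finset (List α)) : Prop :=
  (∀ F ∈ 𝓕, IsFan M' F) ∧ PairwiseDisjointLists 𝓕 ∧ 𝓕.card = FN.card ∧
  (∀ F ∈ FN, ∃ F' ∈ 𝓕, Consistent F F') ∧
  (∀ x ∈ M'.E \ N.E, ∃ F ∈ 𝓕, x ∈ F)

/-- `M` is obtained from `M'` by a fan-lengthening move on the fan `F₀` of `M'`,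
producing the fan `F` of `M`: either `M' = M \ e₁` where `e₁` is a terminal spoke
element of `F`, or `M' = M / e₁` where `e₁` is a terminal rim element of `F`, or
(when `F` has at least five elements) `M' = M / eᵢ \ eᵢ₊₁` for a rim element `eᵢ`
of `F` with `1 ≤ i ≤ n - 1`; in each case `M` and `M'` are 3-connected and `F₀` is
the corresponding shortened fan. -/
def FanLengthen (M' M : Matroid α) (F₀ F : List α) : Prop :=
  ThreeConn M ∧ 4 ≤ F.length ∧ IsFan M' F₀ ∧
  ∃ b, IsFanWith M b F ∧
    ((∃ e F', F = e :: F' ∧ b = true ∧ M' = mdel M {e} ∧ ThreeConn M' ∧ F₀ = F') ∨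
     (∃ e F', F = e :: F' ∧ b = false ∧ M' = mcon M {e} ∧ ThreeConn M' ∧ F₀ = F') ∨
     (5 ≤ F.length ∧ ∃ (l₁ : List α) (x y : α) (l₂ : List α),
        F = l₁ ++ x :: y :: l₂ ∧ fanBool b l₁.length = false ∧
        M' = mdel (mcon M {x}) {y} ∧ ThreeConn M' ∧ F₀ = l₁ ++ l₂))

/-- The fan-extensions of `N` relative to the family `FN` of fans of `N`: the smallest
collection of matroids containing `N` and closed under fan-lengthening moves performed
on fans belonging to covering families. -/
inductive FanExt (N : Matroid α) (FN : Finset (List α)) : Matroid α → Prop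
  | base : FanExt N FN N
  | step (M' M : Matroid α) (𝓕 : Finset (List α)) (F₀ F : List α) :
      FanExt N FN M' → CoveringFamily N FN M' 𝓕 → F₀ ∈ 𝓕 →
      FanLengthen M' M F₀ F → FanExt N FN M

/-- The covering family `𝓕` of `M` admits a fan-shortening move: there are a matroid
`M'` having `N` as a minor and a fan `F₀` of `M'` such that `M` is obtained from `M'`
by a fan-lengthening move on `F₀` producing a fan that belongs to `𝓕`. -/
def AdmitsFanShortening (N M : Matroid α) (𝓕 : Finset (List α)) : Prop :=
  ∃ (M' : Matroid α) (F₀ F : List α), IsMinor N M' ∧ F ∈ 𝓕 ∧ FanLengthen M' M F₀ F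

/-- The alternation pattern of a fan presented as a function with one-based indices:
position `i` carries a spoke element iff `posBool b i = true`, where `b` records
whether the first triple of the fan is a triangle. -/
def posBool (b : Bool) (i : ℕ) : Bool := if i % 2 = 1 then b else !b

/-- `(e 1, ..., e n)` is a fan of `M` whose first triple is a triangle if `b = true`
(so that `e 1` is a spoke element) and a triad if `b = false`: at least three distinct
elements of the ground set in which every three consecutive elements form alternately
triangles and triads. -/
def IsFanFun (M : Matroid α) (b : Bool) (n : ℕ) (e : ℕ → α) : Prop :=
  3 ≤ n ∧ (∀ i j, 1 ≤ i → i ≤ n → 1 ≤ j → j ≤ n → e i = e j → i = j) ∧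
  (∀ i, 1 ≤ i → i ≤ n → e i ∈ M.E) ∧
  ∀ i, 1 ≤ i → i + 2 ≤ n → TriOrTriad M (posBool b i) {e i, e (i+1), e (i+2)}

/-- The set of elements of the fan `(e 1, ..., e n)`. -/
def fanSet (n : ℕ) (e : ℕ → α) : Set α := {a | ∃ i, 1 ≤ i ∧ i ≤ n ∧ a = e i}

/-- The set of rim elements of the fan `(e 1, ..., e n)` with alternation pattern `b`. -/
def rimSet (b : Bool) (n : ℕ) (e : ℕ → α) : Set α :=
  {a | ∃ i, 1 ≤ i ∧ i ≤ n ∧ posBool b i = false ∧ a = e i}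

/-- `M` is representable over the field `𝔽`. -/
def RepOver (M : Matroid α) (𝔽 : Type*) [Field 𝔽] : Prop :=
  ∃ f : α → (α → 𝔽),
    ∀ I : Set α, I ⊆ M.E → (M.Indep I ↔ LinearIndependent 𝔽 (fun x : I => f (x : α)))

/-- `M` has a minor isomorphic to a member of `𝓢`. -/
def HasSMinor (𝓢 : Set (Matroid α)) (M : Matroid α) : Prop :=
  ∃ S ∈ 𝓢, ∃ N, IsMinor N M ∧ IsoTo N S

/-- `M` is `𝓢`-fragile: for every element `e` of `M`, at least one of `M \ e` and
`M / e` has no `𝓢`-minor. -/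
def SFragile (𝓢 : Set (Matroid α)) (M : Matroid α) : Prop :=
  ∀ e ∈ M.E, ¬ HasSMinor 𝓢 (mdel M {e}) ∨ ¬ HasSMinor 𝓢 (mcon M {e})

end PaperDefs

open PaperDefs

/-! A fan `F` with rim `R` and spokes `S` is spanned by `R` and any one spoke, so
`r(F) ≤ r(R) + 1`, and dually `r✶(F) ≤ r✶(S) + 1`. If `E \ F` has at least two elements, then
`(F, E \ F)` is not a 2-separation, and the first bound gives `r(R) + r(E \ F) ≥ r(M) + 1`. Since
`r✶(F) = |F| + r(E \ F) - r(M)`, the second bound gives the reverse inequality, and both together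
force `S` to be coindependent, that is, `R ∪ (E \ F)` to be spanning.

If `E \ F` has at most one element, the same estimates, applied to the subfans that miss two or
three elements, show that `F` with this element inserted between its ends closes up cyclically,
every three cyclically consecutive elements being a triangle or a triad. By orthogonality of
circuits and cocircuits, a circuit of such a matroid that does not contain the whole rim consists
of an arc of rim elements and the two spokes at its ends, so the matroid is a wheel or a whirl. -/

namespace PaperDefs

/-! ### Rank, circuits and 2-separations -/

lemma erk_eq_eRk (M : Matroid α) (X : Set α) : erk M X = M.eRk X := by
  refine le_antisymm (iSup₂_le fun I hI ↦ hI.1.encard_le_eRk_of_subset hI.2) ?_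
  obtain ⟨I, hI⟩ := M.exists_isBasis' X
  rw [← hI.encard_eq_eRk]
  exact le_iSup₂_of_le I ⟨hI.indep, hI.subset⟩ le_rfl

lemma isCircuit_iff_isCircuit {M : Matroid α} {C : Set α} : IsCircuit M C ↔ M.IsCircuit C :=
  isCircuit_iff_forall_ssubset.symm

section TwoSep

variable {M : Matroid α}

lemma lt_eRk_add_eRk_sdiff (hM : ∀ X Y, ¬ TwoSep M X Y) {A : Set α} (hA : A ⊆ M.E)
    (hcard : 2 ≤ A.encard) (hcard' : 2 ≤ (M.E \ A).encard) :
    M.eRank + 1 < M.eRk A + M.eRk (M.E \ A) := by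
  by_contra! hle
  refine hM A (M.E \ A) ⟨union_sdiff_cancel hA, disjoint_sdiff_right, hcard, hcard', ?_⟩
  simpa only [erk_eq_eRk, eRk_ground] using hle

lemma TwoSep.of_dual [M.Finite] {X Y : Set α} (h : TwoSep M✶ X Y) : TwoSep M X Y := by
  obtain ⟨hE, hdisj, hX, hY, hle⟩ := h
  rw [dual_ground] at hE
  have hXY : M.E \ X = Y := by rw [← hE, union_sdiff_cancel_left hdisj.le_bot]
  have hYX : M.E \ Y = X := by rw [← hE, union_sdiff_cancel_right hdisj.le_bot]
  refine ⟨hE, hdisj, hX, hY, ?_⟩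
  have hrX := M.eRk_dual_add_eRank X (hE ▸ subset_union_left)
  have hrY := M.eRk_dual_add_eRank Y (hE ▸ subset_union_right)
  rw [hXY] at hrX
  rw [hYX] at hrY
  simp only [erk_eq_eRk, eRk_ground] at hle ⊢
  refine (ENat.add_le_add_iff_right M.ground_finite.encard_lt_top.ne).1 ?_
  calc M.eRk X + M.eRk Y + M.E.encard
      = (M.eRk Y + X.encard) + (M.eRk X + Y.encard) := by
        rw [← hE, encard_union_eq hdisj]; ring
    _ = (M✶.eRk X + M✶.eRk Y) + (M.eRank + M.eRank) := by rw [← hrX, ← hrY]; ring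
    _ ≤ (M✶.eRank + 1) + (M.eRank + M.eRank) := by gcongr
    _ = M.eRank + 1 + M.E.encard := by rw [← M.eRank_add_eRank_dual]; ring

lemma indep_pair (hM : ∀ X Y, ¬ TwoSep M X Y) (hcard : 4 ≤ M.E.encard) {x y : α} (hx : x ∈ M.E)
    (hy : y ∈ M.E) (hxy : x ≠ y) : M.Indep {x, y} := by
  have hsub : {x, y} ⊆ M.E := pair_subset hx hy
  have hpair : ({x, y} : Set α).encard = 2 := encard_pair hxy
  have hcompl : 2 ≤ (M.E \ {x, y}).encard := by
    have h := encard_sdiff_add_encard_of_subset hsub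
    rw [hpair] at h
    generalize (M.E \ {x, y}).encard = a, M.E.encard = n at *
    enat_to_nat
    omega
  have hlt := lt_eRk_add_eRk_sdiff hM hsub hpair.ge hcompl
  have hle := M.eRk_le_eRank (M.E \ {x, y})
  refine (M.isRkFinite_of_finite (toFinite _)).indep_of_encard_le_eRk ?_
  rw [hpair]
  generalize M.eRk {x, y} = a, M.eRk (M.E \ {x, y}) = c, M.eRank = r at *
  enat_to_nat
  omega

lemma isCircuit_of_encard_eq_three (hM : ∀ X Y, ¬ TwoSep M X Y) (hcard : 4 ≤ M.E.encard)
    {T : Set α} (hT : T ⊆ M.E) (hT3 : T.encard = 3) (hr : M.eRk T ≤ 2) : M.IsCircuit T := by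
  rw [isCircuit_iff_dep_forall_sdiff_singleton_indep]
  refine ⟨(not_indep_iff hT).1 fun hI ↦ ?_, fun z hz ↦ ?_⟩
  · rw [hI.eRk_eq_encard, hT3] at hr
    exact absurd hr (by decide)
  · have h2 : (T \ {z}).encard = 2 := by
      rw [encard_sdiff_singleton_of_mem hz, hT3]; rfl
    obtain ⟨x, y, hxy, hxyT⟩ := encard_eq_two.1 h2
    have hsub : {x, y} ⊆ M.E := hxyT ▸ sdiff_subset.trans hT
    rw [hxyT]
    exact indep_pair hM hcard (hsub (by simp)) (hsub (by simp)) hxy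

end TwoSep

section TriangleChain

variable {M : Matroid α} {X : Set α}

lemma mem_closure_of_triangle {x y z : α} (hC : M.IsCircuit {x, y, z}) (hx : x ∈ M.closure X)
    (hy : y ∈ M.closure X) : z ∈ M.closure X := by
  have hsub : ({x, y, z} : Set α) \ {z} ⊆ M.closure X := by
    rintro t ⟨rfl | rfl | rfl, ht⟩
    exacts [hx, hy, absurd rfl ht]
  exact closure_subset_closure_of_subset_closure hsub
    (hC.mem_closure_sdiff_singleton_of_mem (by simp))

lemma mem_closure_of_triangle_chain {x y : ℕ → α} {n : ℕ}
    (hC : ∀ k < n, M.IsCircuit {x k, y k, x (k + 1)}) (hx : x 0 ∈ M.closure X)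
    (hy : ∀ k < n, y k ∈ M.closure X) : x n ∈ M.closure X := by
  induction n with
  | zero => exact hx
  | succ n ih =>
    exact mem_closure_of_triangle (hC n n.lt_succ_self)
      (ih (fun k hk ↦ hC k (hk.trans n.lt_succ_self)) fun k hk ↦ hy k (hk.trans n.lt_succ_self))
      (hy n n.lt_succ_self)

end TriangleChain

/-! ### Fans -/

/-- The elements `e a, ..., e (c - 1)`, in this order, are distinct elements of `M` of which three
consecutive ones `e i, e (i + 1), e (i + 2)` form a triangle if `i + p` is even and a triad if
`i + p` is odd. For `a + 3 ≤ c` this is a fan whose spoke elements are the `e i` with `i + p` even;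
shorter sequences are allowed, so that subintervals need no side condition. -/
structure IsFanOn (M : Matroid α) (p : ℕ) (e : ℕ → α) (a c : ℕ) : Prop where
  injOn : InjOn e (Ico a c)
  mapsTo : MapsTo e (Ico a c) M.E
  isCircuit : ∀ i, a ≤ i → i + 2 < c → Even (i + p) → M.IsCircuit {e i, e (i + 1), e (i + 2)}
  isCocircuit : ∀ i, a ≤ i → i + 2 < c → Odd (i + p) → M.IsCocircuit {e i, e (i + 1), e (i + 2)}

/-- The elements `e i` with `a ≤ i < c` and `i + p` odd, which are the rim elements of the fan in
`IsFanOn M p e a c`. Its spoke elements are `rim (p + 1) e a c`, the rim elements in `M✶`. -/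
def rim (p : ℕ) (e : ℕ → α) (a c : ℕ) : Set α := e '' {i ∈ Ico a c | Odd (i + p)}

section Rim

variable {p : ℕ} {e : ℕ → α} {a c : ℕ}

lemma rim_subset : rim p e a c ⊆ e '' Ico a c := image_mono (sep_subset _ _)

lemma rim_add_one : rim (p + 1) e a c = e '' {i ∈ Ico a c | Even (i + p)} := by
  simp only [rim, ← add_assoc, Nat.odd_add_one, Nat.not_odd_iff_even]

lemma disjoint_rim (he : InjOn e (Ico a c)) : Disjoint (rim p e a c) (rim (p + 1) e a c) := by
  rw [rim_add_one, rim, disjoint_iff_inter_eq_empty,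
    ← he.image_inter (sep_subset _ _) (sep_subset _ _), image_eq_empty, eq_empty_iff_forall_notMem]
  exact fun i hi ↦ Nat.not_even_iff_odd.2 hi.1.2 hi.2.2

lemma rim_union_rim_add_one : rim p e a c ∪ rim (p + 1) e a c = e '' Ico a c := by
  rw [rim_add_one, rim, ← image_union, ← sep_or]
  simp only [← Nat.not_even_iff_odd, em', sep_true]

lemma card_filter_odd_add_Ico (a c p : ℕ) :
    {i ∈ Finset.Ico a c | Odd (i + p)}.card = (c + p) / 2 - (a + p) / 2 := by
  induction c with
  | zero => rw [Finset.Ico_eq_empty_of_le a.zero_le, Finset.filter_empty, Finset.card_empty]; omega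
  | succ c ih =>
    obtain hac | hca := le_or_gt a c
    · rw [Finset.card_filter, Finset.sum_Ico_succ_top hac, ← Finset.card_filter, ih]
      split_ifs with hodd <;> rw [Nat.odd_iff] at hodd <;> omega
    · rw [Finset.Ico_eq_empty_of_le hca, Finset.filter_empty, Finset.card_empty]
      omega

lemma encard_image_Ico (he : InjOn e (Ico a c)) :
    (e '' Ico a c).encard = (c - a : ℕ) := by
  rw [he.encard_image, ← Finset.coe_Ico, encard_coe_eq_coe_finsetCard, Nat.card_Ico]

lemma encard_rim (he : InjOn e (Ico a c)) :
    (rim p e a c).encard = ((c + p) / 2 - (a + p) / 2 : ℕ) := by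
  rw [rim, (he.mono (sep_subset _ _)).encard_image, ← card_filter_odd_add_Ico,
    ← encard_coe_eq_coe_finsetCard, Finset.coe_filter]
  simp only [Finset.mem_Ico, mem_Ico]

end Rim

namespace IsFanOn

variable {M : Matroid α} {p : ℕ} {e : ℕ → α} {a c : ℕ}

lemma dual (h : IsFanOn M p e a c) : IsFanOn M✶ (p + 1) e a c where
  injOn := h.injOn
  mapsTo := h.mapsTo
  isCircuit i hai hic hi := h.isCocircuit i hai hic (by rwa [← add_assoc, Nat.even_add_one,
    Nat.not_even_iff_odd] at hi)
  isCocircuit i hai hic hi := (dual_isCocircuit_iff).2 <| h.isCircuit i hai hic (by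
    rwa [← add_assoc, Nat.odd_add_one, Nat.not_odd_iff_even] at hi)

lemma mono (h : IsFanOn M p e a c) {a' c' : ℕ} (ha : a ≤ a') (hc : c' ≤ c) :
    IsFanOn M p e a' c' where
  injOn := h.injOn.mono (Ico_subset_Ico ha hc)
  mapsTo := h.mapsTo.mono_left (Ico_subset_Ico ha hc)
  isCircuit i hai hic := h.isCircuit i (ha.trans hai) (hic.trans_le hc)
  isCocircuit i hai hic := h.isCocircuit i (ha.trans hai) (hic.trans_le hc)

lemma congr {f : ℕ → α} (h : IsFanOn M p e a c) (hef : EqOn e f (Ico a c)) :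
    IsFanOn M p f a c where
  injOn := h.injOn.congr hef
  mapsTo := h.mapsTo.congr hef
  isCircuit i hai hic hi := by
    rw [← hef (x := i) ⟨by omega, by omega⟩, ← hef (x := i + 1) ⟨by omega, by omega⟩,
      ← hef (x := i + 2) ⟨by omega, by omega⟩]
    exact h.isCircuit i hai hic hi
  isCocircuit i hai hic hi := by
    rw [← hef (x := i) ⟨by omega, by omega⟩, ← hef (x := i + 1) ⟨by omega, by omega⟩,
      ← hef (x := i + 2) ⟨by omega, by omega⟩]
    exact h.isCocircuit i hai hic hi

lemma image_subset_ground (h : IsFanOn M p e a c) : e '' Ico a c ⊆ M.E := h.mapsTo.image_subset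

lemma exists_subset_closure_insert_rim (h : IsFanOn M p e a c) :
    ∃ s, e '' Ico a c ⊆ M.closure (insert s (rim p e a c)) := by
  obtain ⟨i₀, hi₀⟩ : ∃ i₀, i₀ = a + (a + p) % 2 := ⟨_, rfl⟩
  refine ⟨e i₀, image_subset_iff.2 fun j hj ↦ ?_⟩
  have hmem {i} (hi : i ∈ Ico a c) (hodd : Odd (i + p)) :
      e i ∈ M.closure (insert (e i₀) (rim p e a c)) :=
    M.mem_closure_of_mem' (mem_insert_of_mem _ (mem_image_of_mem e ⟨hi, hodd⟩)) (h.mapsTo hi)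
  rw [mem_Ico] at hj
  obtain heven | hodd := (j + p).even_or_odd
  · rw [Nat.even_iff] at heven
    obtain ⟨k, rfl⟩ : ∃ k, j = i₀ + 2 * k := ⟨(j - i₀) / 2, by omega⟩
    refine mem_closure_of_triangle_chain (x := fun t ↦ e (i₀ + 2 * t))
      (y := fun t ↦ e (i₀ + 2 * t + 1)) (fun t ht ↦ ?_) ?_ fun t ht ↦ ?_
    · exact h.isCircuit _ (by omega) (by omega) (Nat.even_iff.2 (by omega))
    · exact M.mem_closure_of_mem' (mem_insert _ _) (h.mapsTo ⟨by omega, by omega⟩)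
    · exact hmem ⟨by omega, by omega⟩ (Nat.odd_iff.2 (by omega))
  · exact hmem hj hodd

lemma eRk_image_le (h : IsFanOn M p e a c) :
    M.eRk (e '' Ico a c) ≤ M.eRk (rim p e a c) + 1 := by
  obtain ⟨s, hs⟩ := h.exists_subset_closure_insert_rim
  calc M.eRk (e '' Ico a c) ≤ M.eRk (M.closure (insert s (rim p e a c))) := M.eRk_mono hs
    _ = M.eRk (insert s (rim p e a c)) := M.eRk_closure_eq _
    _ ≤ M.eRk (rim p e a c) + 1 := M.eRk_insert_le_add_one _ _

lemma eRk_sdiff_add_encard_rim_le (h : IsFanOn M p e a c) :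
    M.eRk (M.E \ e '' Ico a c) + (rim p e a c).encard ≤ M.eRank + 1 := by
  have hfin : (rim (p + 1) e a c).encard ≠ ⊤ := by
    rw [encard_rim h.injOn]; exact ENat.natCast_ne_top _
  refine (ENat.add_le_add_iff_right hfin).1 ?_
  calc M.eRk (M.E \ e '' Ico a c) + (rim p e a c).encard + (rim (p + 1) e a c).encard
      = M✶.eRk (e '' Ico a c) + M.eRank := by
        rw [add_assoc, ← encard_union_eq (disjoint_rim h.injOn), rim_union_rim_add_one,
          M.eRk_dual_add_eRank _ h.image_subset_ground]
    _ ≤ (rim (p + 1) e a c).encard + 1 + M.eRank := by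
        gcongr; exact h.dual.eRk_image_le.trans (add_le_add_left (eRk_le_encard _ _) 1)
    _ = M.eRank + 1 + (rim (p + 1) e a c).encard := by ring

lemma eRank_add_one_le (h : IsFanOn M p e a c) (hM : ∀ X Y, ¬ TwoSep M X Y)
    (hF : 2 ≤ (e '' Ico a c).encard) (hX : 2 ≤ (M.E \ e '' Ico a c).encard) :
    M.eRank + 1 ≤ M.eRk (rim p e a c) + M.eRk (M.E \ e '' Ico a c) := by
  refine Order.le_of_lt_add_one ?_
  calc M.eRank + 1 < M.eRk (e '' Ico a c) + M.eRk (M.E \ e '' Ico a c) :=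
        lt_eRk_add_eRk_sdiff hM h.image_subset_ground hF hX
    _ ≤ M.eRk (rim p e a c) + 1 + M.eRk (M.E \ e '' Ico a c) := by gcongr; exact h.eRk_image_le
    _ = M.eRk (rim p e a c) + M.eRk (M.E \ e '' Ico a c) + 1 := by ring

lemma spanning_rim_union_sdiff (h : IsFanOn M p e a c) (hM : ∀ X Y, ¬ TwoSep M X Y)
    (hF : 2 ≤ (e '' Ico a c).encard) (hX : 2 ≤ (M.E \ e '' Ico a c).encard) :
    M.Spanning (rim p e a c ∪ (M.E \ e '' Ico a c)) := by
  have hS : rim (p + 1) e a c ⊆ M.E := rim_subset.trans h.image_subset_ground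
  have hcompl : M.E \ rim (p + 1) e a c = rim p e a c ∪ (M.E \ e '' Ico a c) := by
    have hR : rim p e a c ⊆ M.E \ rim (p + 1) e a c := subset_sdiff.2
      ⟨rim_subset.trans h.image_subset_ground, disjoint_rim h.injOn⟩
    rw [← rim_union_rim_add_one (p := p), union_comm (rim p e a c) (rim _ _ _ _),
      ← sdiff_sdiff, union_sdiff_cancel hR]
  have hr : M.eRank + 1 ≠ ⊤ :=
    (lt_eRk_add_eRk_sdiff hM h.image_subset_ground hF hX).ne_top
  have hfin : (rim (p + 1) e a c).Finite := ((finite_Ico a c).image e).subset rim_subset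
  rw [← hcompl, ← coindep_iff_compl_spanning hS]
  refine (M✶.isRkFinite_of_finite hfin).indep_of_encard_le_eRk
    ((ENat.add_le_add_iff_right hr).1 ?_)
  calc (rim (p + 1) e a c).encard + (M.eRank + 1)
      ≤ (rim (p + 1) e a c).encard + (M.eRk (rim p e a c) + M.eRk (M.E \ e '' Ico a c)) := by
        gcongr _ + ?_; exact h.eRank_add_one_le hM hF hX
    _ ≤ (rim (p + 1) e a c).encard + ((rim p e a c).encard + M.eRk (M.E \ e '' Ico a c)) := by
        gcongr; exact M.eRk_le_encard _
    _ = M✶.eRk (e '' Ico a c) + M.eRank := by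
        rw [M.eRk_dual_add_eRank _ h.image_subset_ground, ← rim_union_rim_add_one (p := p),
          encard_union_eq (disjoint_rim h.injOn)]
        ring
    _ ≤ M✶.eRk (rim (p + 1) e a c) + 1 + M.eRank := by gcongr; exact h.dual.eRk_image_le
    _ = M✶.eRk (rim (p + 1) e a c) + (M.eRank + 1) := by ring

theorem eRk_rim_add_eRk_sdiff (h : IsFanOn M p e a c) (hM : ∀ X Y, ¬ TwoSep M X Y)
    (hF : 2 ≤ (e '' Ico a c).encard) (hX : 2 ≤ (M.E \ e '' Ico a c).encard) :
    M.eRk (rim p e a c) + M.eRk (M.E \ e '' Ico a c)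
      = M.eRk (rim p e a c ∪ (M.E \ e '' Ico a c)) + 1 := by
  rw [(h.spanning_rim_union_sdiff hM hF hX).eRk_eq]
  refine le_antisymm ?_ (h.eRank_add_one_le hM hF hX)
  calc M.eRk (rim p e a c) + M.eRk (M.E \ e '' Ico a c)
      ≤ (rim p e a c).encard + M.eRk (M.E \ e '' Ico a c) := by gcongr; exact M.eRk_le_encard _
    _ = M.eRk (M.E \ e '' Ico a c) + (rim p e a c).encard := add_comm _ _
    _ ≤ M.eRank + 1 := h.eRk_sdiff_add_encard_rim_le

end IsFanOn

/-! ### Recognising wheels and whirls -/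

lemma mem_or_mem_of_triad {M : Matroid α} {C : Set α} {x y z : α} (hC : M.IsCircuit C)
    (hK : M.IsCocircuit {x, y, z}) (hx : x ∈ C) : y ∈ C ∨ z ∈ C := by
  by_contra! hyz
  refine hC.inter_isCocircuit_ne_singleton hK (e := x) (subset_antisymm ?_ ?_)
  · rintro t ⟨ht, rfl | rfl | rfl⟩
    exacts [rfl, absurd ht hyz.1, absurd ht hyz.2]
  · exact singleton_subset_iff.2 ⟨hx, by simp⟩

section CycArc

variable {m : ℕ}

lemma left_mem_cycArc {i j : ZMod m} (hij : i ≠ j) : i ∈ cycArc m i j :=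
  ⟨0, ZMod.val_pos.2 (sub_ne_zero.2 hij.symm), by rw [Nat.cast_zero, add_zero]⟩

lemma right_notMem_cycArc (i j : ZMod m) : j ∉ cycArc m i j := by
  rintro ⟨t, ht, hj⟩
  rw [← sub_eq_iff_eq_add'] at hj
  rw [hj, ZMod.val_natCast] at ht
  exact (Nat.mod_le t m).not_gt ht

lemma exists_first_natCast_add [NeZero m] {P : ZMod m → Prop} (l : ZMod m) (hP : ∃ k, P k) :
    ∃ t < m, P (l + (t : ℕ)) ∧ ∀ u < t, ¬ P (l + (u : ℕ)) := by
  classical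
  obtain ⟨k, hk⟩ := hP
  have hval : P (l + ((k - l).val : ℕ)) := by rwa [ZMod.natCast_zmod_val, add_sub_cancel]
  have hex : ∃ t : ℕ, P (l + (t : ℕ)) := ⟨_, hval⟩
  exact ⟨Nat.find hex, (Nat.find_min' hex hval).trans_lt (ZMod.val_lt _), Nat.find_spec hex,
    fun u ↦ Nat.find_min hex⟩

end CycArc

/-- The spokes `s i` and the rim elements `w i` form a fan that closes up cyclically and exhausts
`M`: they are distinct, and `{s i, w i, s (i + 1)}` is a triangle and `{w i, s (i + 1), w (i + 1)}`
a triad for every `i` modulo `m`. -/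
structure IsCyclicFan (M : Matroid α) {m : ℕ} (s w : ZMod m → α) : Prop where
  injective : Function.Injective (Sum.elim s w)
  ground_eq : M.E = range s ∪ range w
  isCircuit : ∀ i, M.IsCircuit {s i, w i, s (i + 1)}
  isCocircuit : ∀ i, M.IsCocircuit {w i, s (i + 1), w (i + 1)}

/-- Two spokes together with the rim elements of the arc from the first to the second: the
circuits other than the rim in a wheel, and the circuits not containing the rim in a whirl. -/
def arcSet {m : ℕ} (s w : ZMod m → α) (i j : ZMod m) : Set α := {s i, s j} ∪ w '' cycArc m i j

namespace IsCyclicFan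

variable {M : Matroid α} {m : ℕ} {s w : ZMod m → α} {i j : ZMod m} {C : Set α}

lemma spoke_inj (h : IsCyclicFan M s w) : s i = s j ↔ i = j :=
  (h.injective.comp Sum.inl_injective).eq_iff

lemma rim_inj (h : IsCyclicFan M s w) : w i = w j ↔ i = j :=
  (h.injective.comp Sum.inr_injective).eq_iff

lemma spoke_ne_rim (h : IsCyclicFan M s w) (i j : ZMod m) : s i ≠ w j :=
  h.injective.ne Sum.inl_ne_inr

lemma spoke_mem_ground (h : IsCyclicFan M s w) (i : ZMod m) : s i ∈ M.E :=
  h.ground_eq ▸ Or.inl (mem_range_self i)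

lemma rim_mem_ground (h : IsCyclicFan M s w) (i : ZMod m) : w i ∈ M.E :=
  h.ground_eq ▸ Or.inr (mem_range_self i)

lemma dual (h : IsCyclicFan M s w) : IsCyclicFan M✶ w fun i ↦ s (i + 1) where
  injective := (h.injective.comp Sum.inr_injective).sumElim
    ((h.injective.comp Sum.inl_injective).comp (add_left_injective 1))
    fun _ _ ↦ (h.spoke_ne_rim _ _).symm
  ground_eq := by
    rw [dual_ground, h.ground_eq, union_comm, ← (add_right_surjective (1 : ZMod m)).range_comp s]
    rfl
  isCircuit := h.isCocircuit
  isCocircuit i := dual_isCocircuit_iff.2 (h.isCircuit (i + 1))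

lemma exists_rim_mem (h : IsCyclicFan M s w) (hC : M.IsCircuit C) : ∃ k, w k ∈ C := by
  obtain ⟨x, hx⟩ := hC.nonempty
  obtain ⟨k, rfl⟩ | ⟨k, rfl⟩ := h.ground_eq ▸ hC.subset_ground hx
  · have hK := h.isCocircuit (k - 1)
    rw [sub_add_cancel, insert_comm] at hK
    exact (mem_or_mem_of_triad hC hK hx).elim (⟨_, ·⟩) (⟨_, ·⟩)
  · exact ⟨k, hx⟩

lemma spoke_mem_of_rim_notMem_of_mem (h : IsCyclicFan M s w) (hC : M.IsCircuit C)
    (hi : w i ∉ C) (hi' : w (i + 1) ∈ C) : s (i + 1) ∈ C := by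
  have hK := h.isCocircuit i
  rw [pair_comm, insert_comm] at hK
  exact (mem_or_mem_of_triad hC hK hi').resolve_left hi

lemma spoke_mem_of_rim_mem_of_notMem (h : IsCyclicFan M s w) (hC : M.IsCircuit C)
    (hi : w i ∈ C) (hi' : w (i + 1) ∉ C) : s (i + 1) ∈ C :=
  (mem_or_mem_of_triad hC (h.isCocircuit i) hi).resolve_right hi'

variable [NeZero m]

lemma exists_arcSet_subset (h : IsCyclicFan M s w) (hC : M.IsCircuit C) (hw : ¬ range w ⊆ C) :
    ∃ i j, i ≠ j ∧ arcSet s w i j ⊆ C := by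
  obtain ⟨l, hl⟩ : ∃ l, w l ∉ C := by simpa only [range_subset_iff, not_forall] using hw
  obtain ⟨i, hi, hi'⟩ : ∃ i, w i ∉ C ∧ w (i + 1) ∈ C := by
    obtain ⟨_ | t, -, ht, hmin⟩ := exists_first_natCast_add l (h.exists_rim_mem hC)
    · exact absurd (by simpa using ht) hl
    · exact ⟨l + t, hmin t t.lt_succ_self, by rwa [add_assoc, ← Nat.cast_succ]⟩
  obtain ⟨_ | t, htm, ht, hmin⟩ := exists_first_natCast_add (P := (w · ∉ C)) (i + 1) ⟨l, hl⟩
  · exact absurd hi' (by simpa using ht)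
  · simp only [not_not] at hmin
    refine ⟨i + 1, i + 1 + (t + 1 : ℕ), ?_, union_subset (pair_subset ?_ ?_) ?_⟩
    · rw [Ne, left_eq_add, ZMod.natCast_eq_zero_iff]
      exact Nat.not_dvd_of_pos_of_lt t.succ_pos htm
    · exact h.spoke_mem_of_rim_notMem_of_mem hC hi hi'
    · rw [Nat.cast_succ, ← add_assoc] at ht ⊢
      exact h.spoke_mem_of_rim_mem_of_notMem hC (hmin t t.lt_succ_self) ht
    · rintro _ ⟨_, ⟨u, hu, rfl⟩, rfl⟩
      rw [add_sub_cancel_left, ZMod.val_natCast, Nat.mod_eq_of_lt htm] at hu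
      exact hmin u hu

lemma dep_arcSet (h : IsCyclicFan M s w) (hij : i ≠ j) : M.Dep (arcSet s w i j) := by
  have hE : arcSet s w i j ⊆ M.E :=
    union_subset (pair_subset (h.spoke_mem_ground i) (h.spoke_mem_ground j))
      (image_subset_iff.2 fun k _ ↦ h.rim_mem_ground k)
  refine (not_indep_iff hE).1 fun hI ↦
    hI.notMem_closure_sdiff_of_mem (e := s j) (by simp [arcSet]) ?_
  have hsj : j = i + ((j - i).val : ℕ) := by rw [ZMod.natCast_zmod_val, add_sub_cancel]
  rw [congrArg s hsj]
  refine mem_closure_of_triangle_chain (x := fun t ↦ s (i + (t : ℕ)))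
    (y := fun t ↦ w (i + (t : ℕ))) (fun t _ ↦ ?_) ?_ fun t ht ↦ ?_
  · rw [Nat.cast_succ, ← add_assoc]
    exact h.isCircuit _
  · rw [Nat.cast_zero, add_zero]
    exact M.mem_closure_of_mem' ⟨by simp [arcSet], by simp [h.spoke_inj, hij]⟩
      (h.spoke_mem_ground i)
  · exact M.mem_closure_of_mem' ⟨Or.inr (mem_image_of_mem w ⟨t, ht, rfl⟩),
      (h.spoke_ne_rim _ _).symm⟩ (h.rim_mem_ground _)

lemma isCircuit_arcSet (h : IsCyclicFan M s w) (hij : i ≠ j) : M.IsCircuit (arcSet s w i j) := by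
  obtain ⟨C, hCC, hC⟩ := (h.dep_arcSet hij).exists_isCircuit_subset
  have hspoke {k} (hk : s k ∈ arcSet s w i j) : k = i ∨ k = j := by
    simpa [arcSet, h.spoke_inj, (h.spoke_ne_rim _ _).symm] using hk
  have hrim {k} (hk : w k ∈ arcSet s w i j) : k ∈ cycArc m i j := by
    simpa [arcSet, h.rim_inj, (h.spoke_ne_rim _ _).symm] using hk
  obtain ⟨i', j', hij', hsub⟩ := h.exists_arcSet_subset hC fun hw ↦
    right_notMem_cycArc i j (hrim (hCC (hw (mem_range_self j))))
  have hi' : i' = i := (hspoke (hCC (hsub (by simp [arcSet])))).resolve_right fun hi' ↦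
    right_notMem_cycArc i j (hrim (hCC (hsub
      (Or.inr (mem_image_of_mem w (hi' ▸ left_mem_cycArc hij'))))))
  have hj' : j' = j := (hspoke (hCC (hsub (by simp [arcSet])))).resolve_left fun hj' ↦
    hij' (hi'.trans hj'.symm)
  subst hi' hj'
  rwa [← hCC.antisymm hsub]

lemma range_rim_subset_of_isCircuit (h : IsCyclicFan M s w) (hC : M.IsCircuit C)
    (hs : ∀ i j, s i ∈ C → s j ∈ C → i = j) : range w ⊆ C := by
  by_contra hw
  obtain ⟨i, j, hij, hsub⟩ := h.exists_arcSet_subset hC hw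
  exact hij (hs i j (hsub (by simp [arcSet])) (hsub (by simp [arcSet])))

lemma indep_insert_range_rim_sdiff (h : IsCyclicFan M s w) (j k : ZMod m) :
    M.Indep (insert (s j) (range w \ {w k})) := by
  by_contra hI
  rw [not_indep_iff (insert_subset (h.spoke_mem_ground j)
    (sdiff_subset.trans (range_subset_iff.2 h.rim_mem_ground)))] at hI
  obtain ⟨C, hsub, hC⟩ := hI.exists_isCircuit_subset
  have hs {i} (hi : s i ∈ C) : i = j := by
    simpa [h.spoke_inj, (h.spoke_ne_rim _ _).symm] using hsub hi
  have hwk := h.range_rim_subset_of_isCircuit hC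
    (fun i i' hi hi' ↦ (hs hi).trans (hs hi').symm) (mem_range_self k)
  simpa [(h.spoke_ne_rim _ _).symm] using hsub hwk

lemma isCircuit_range_rim (h : IsCyclicFan M s w) (hw : M.Dep (range w)) :
    M.IsCircuit (range w) := by
  obtain ⟨C, hsub, hC⟩ := hw.exists_isCircuit_subset
  have hs (i) : s i ∉ C := fun hi ↦ by
    simpa [(h.spoke_ne_rim _ _).symm] using hsub hi
  rwa [← hsub.antisymm (h.range_rim_subset_of_isCircuit hC fun i _ hi ↦ absurd hi (hs i))]

lemma dep_insert_range_rim (h : IsCyclicFan M s w) (i : ZMod m) :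
    M.Dep (insert (s i) (range w)) := by
  have hE : insert (s i) (range w) ⊆ M.E :=
    insert_subset (h.spoke_mem_ground i) (range_subset_iff.2 h.rim_mem_ground)
  have hcoindep : M.Coindep (insert (w 0) (range (fun k ↦ s (k + 1)) \ {s (i - 1 + 1)})) :=
    h.dual.indep_insert_range_rim_sdiff 0 (i - 1)
  rw [sub_add_cancel] at hcoindep
  have hspan : M.Spanning (insert (s i) (range w) \ {w 0}) := by
    refine hcoindep.compl_spanning.superset ?_ (sdiff_subset.trans hE)
    rintro x ⟨hxE, hx⟩
    obtain ⟨k, rfl⟩ | ⟨k, rfl⟩ := h.ground_eq ▸ hxE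
    · have hki : s k = s i := by
        by_contra hki
        exact hx (Or.inr ⟨⟨k - 1, congrArg s (sub_add_cancel k 1)⟩, hki⟩)
      exact ⟨Or.inl hki, h.spoke_ne_rim _ _⟩
    · exact ⟨Or.inr (mem_range_self k), fun hk ↦ hx (Or.inl hk)⟩
  exact (not_indep_iff hE).1 fun hI ↦ hI.notMem_closure_sdiff_of_mem
    (mem_insert_of_mem _ (mem_range_self 0)) (hspan.closure_eq ▸ h.rim_mem_ground 0)

lemma isCircuit_insert_range_rim (h : IsCyclicFan M s w) (hw : M.Indep (range w)) (i : ZMod m) :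
    M.IsCircuit (insert (s i) (range w)) := by
  obtain ⟨C, hsub, hC⟩ := (h.dep_insert_range_rim i).exists_isCircuit_subset
  have hs {j} (hj : s j ∈ C) : j = i := by
    simpa [h.spoke_inj, (h.spoke_ne_rim _ _).symm] using hsub hj
  have hwC := h.range_rim_subset_of_isCircuit hC fun j j' hj hj' ↦ (hs hj).trans (hs hj').symm
  have hi : s i ∈ C := by
    by_contra hi
    exact hC.not_indep (hw.subset ((subset_insert_iff_of_notMem hi).1 hsub))
  rwa [← hsub.antisymm (insert_subset hi hwC)]

lemma exists_eq_arcSet (h : IsCyclicFan M s w) (hC : M.IsCircuit C) (hw : ¬ range w ⊆ C) :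
    ∃ i j, i ≠ j ∧ C = arcSet s w i j := by
  obtain ⟨i, j, hij, hsub⟩ := h.exists_arcSet_subset hC hw
  exact ⟨i, j, hij, ((h.isCircuit_arcSet hij).eq_of_subset_isCircuit hC hsub).symm⟩

lemma exists_eq_insert_range_rim (h : IsCyclicFan M s w) (hw : M.Indep (range w))
    (hC : M.IsCircuit C) (hwC : range w ⊆ C) : ∃ i, C = insert (s i) (range w) := by
  obtain ⟨x, hxC, hxw⟩ := not_subset.1 fun hsub ↦ hC.not_indep (hw.subset hsub)
  obtain ⟨i, rfl⟩ : x ∈ range s := (h.ground_eq ▸ hC.subset_ground hxC).resolve_right hxw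
  exact ⟨i, ((h.isCircuit_insert_range_rim hw i).eq_of_subset_isCircuit hC
    (insert_subset hxC hwC)).symm⟩

theorem isWheel_or_isWhirl (h : IsCyclicFan M s w) (hm : 2 ≤ m) : IsWheel M ∨ IsWhirl M := by
  by_cases hw : M.Indep (range w)
  · refine .inr ⟨m, hm, s, w, h.injective, h.ground_eq, fun C ↦ ?_⟩
    rw [isCircuit_iff_isCircuit]
    refine ⟨fun hC ↦ ?_, ?_⟩
    · by_cases hwC : range w ⊆ C
      exacts [.inl (h.exists_eq_insert_range_rim hw hC hwC), .inr (h.exists_eq_arcSet hC hwC)]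
    · rintro (⟨i, rfl⟩ | ⟨i, j, hij, rfl⟩)
      exacts [h.isCircuit_insert_range_rim hw i, h.isCircuit_arcSet hij]
  · have hcirc : M.IsCircuit (range w) :=
      h.isCircuit_range_rim ((not_indep_iff (h.ground_eq ▸ subset_union_right)).1 hw)
    refine .inl ⟨m, hm, s, w, h.injective, h.ground_eq, fun C ↦ ?_⟩
    rw [isCircuit_iff_isCircuit]
    refine ⟨fun hC ↦ ?_, ?_⟩
    · by_cases hwC : range w ⊆ C
      exacts [.inl (hcirc.eq_of_subset_isCircuit hC hwC).symm, .inr (h.exists_eq_arcSet hC hwC)]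
    · rintro (rfl | ⟨i, j, hij, rfl⟩)
      exacts [hcirc, h.isCircuit_arcSet hij]

end IsCyclicFan

/-! ### Fans missing at most one element -/

section Periodic

variable {M : Matroid α} {L m : ℕ} {f : ℕ → α} {E : Set α}

lemma exists_mem_Ico_add_modEq (hL : 0 < L) (a i : ℕ) : ∃ j ∈ Ico a (a + L), j ≡ i [MOD L] := by
  have hi : i % L ∈ (Finset.Ico a (a + L)).image (· % L) := by
    rw [Nat.image_Ico_mod, Finset.mem_range]
    exact Nat.mod_lt i hL
  obtain ⟨j, hj, hji⟩ := Finset.mem_image.1 hi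
  exact ⟨j, Finset.mem_Ico.1 hj, hji⟩

lemma eq_of_modEq_of_periodic (hper : Function.Periodic f L) {i j : ℕ} (hij : i ≡ j [MOD L]) :
    f i = f j := by
  rw [← hper.map_mod_nat i, ← hper.map_mod_nat j, hij]

lemma bijOn_Ico_add_of_periodic (hper : Function.Periodic f L) (hf : BijOn f (Ico 0 L) E) (a : ℕ) :
    BijOn f (Ico a (a + L)) E := by
  have hmod {i} (hi : i ∈ Ico a (a + L)) : i % L ∈ Ico 0 L :=
    ⟨Nat.zero_le _, Nat.mod_lt i (by rw [mem_Ico] at hi; omega)⟩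
  refine ⟨fun i hi ↦ ?_, fun i hi j hj hij ↦ ?_, fun x hx ↦ ?_⟩
  · rw [← hper.map_mod_nat]
    exact hf.mapsTo (hmod hi)
  · rw [← hper.map_mod_nat i, ← hper.map_mod_nat j] at hij
    exact Nat.mod_injOn_Ico a L (Finset.mem_Ico.2 hi) (Finset.mem_Ico.2 hj)
      (hf.injOn (hmod hi) (hmod hj) hij)
  · obtain ⟨k, hk, rfl⟩ := hf.surjOn hx
    obtain ⟨j, hj, hjk⟩ := exists_mem_Ico_add_modEq (hk.1.trans_lt hk.2) a k
    exact ⟨j, hj, eq_of_modEq_of_periodic hper hjk⟩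

lemma sdiff_image_Ico_of_periodic (hper : Function.Periodic f L) (hf : BijOn f (Ico 0 L) E)
    {a c : ℕ} (hac : a ≤ c) (hca : c ≤ a + L) : E \ f '' Ico a c = f '' Ico c (a + L) := by
  have ha := bijOn_Ico_add_of_periodic hper hf a
  have hsub : Ico a c ⊆ Ico a (a + L) := Ico_subset_Ico_right hca
  have hIco : Ico a (a + L) \ Ico a c = Ico c (a + L) := by
    ext i; simp only [mem_sdiff, mem_Ico]; omega
  rw [← ha.image_eq, ← ha.injOn.image_sdiff_subset hsub, hIco]

lemma encard_sdiff_image_Ico_of_periodic (hper : Function.Periodic f L)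
    (hf : BijOn f (Ico 0 L) E) {a c : ℕ} (hac : a ≤ c) (hca : c ≤ a + L) :
    (E \ f '' Ico a c).encard = (a + L - c : ℕ) := by
  rw [sdiff_image_Ico_of_periodic hper hf hac hca, encard_image_Ico
    ((bijOn_Ico_add_of_periodic hper hf a).injOn.mono (Ico_subset_Ico_left hac))]

lemma two_mul_val_add_one_of_periodic [NeZero m] (hper : Function.Periodic f (2 * m)) (i : ZMod m) :
    f (2 * (i + 1).val) = f (2 * (i.val + 1)) := by
  rw [← hper.map_mod_nat (2 * (i.val + 1)), Nat.mul_mod_mul_left, ZMod.val_add,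
    ZMod.val_one_eq_one_mod, Nat.add_mod_mod]

lemma isCyclicFan_of_periodic [NeZero m] (hper : Function.Periodic f (2 * m))
    (hbij : BijOn f (Ico 0 (2 * m)) M.E)
    (htri : ∀ k, Even k → M.IsCircuit {f k, f (k + 1), f (k + 2)})
    (htriad : ∀ k, Odd k → M.IsCocircuit {f k, f (k + 1), f (k + 2)}) :
    IsCyclicFan M (fun i : ZMod m ↦ f (2 * i.val)) fun i ↦ f (2 * i.val + 1) where
  injective := by
    have hinj {k l : ℕ} (hk : k < 2 * m) (hl : l < 2 * m) (hkl : f k = f l) : k = l :=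
      hbij.injOn ⟨k.zero_le, hk⟩ ⟨l.zero_le, hl⟩ hkl
    refine Function.Injective.sumElim (fun i j hij ↦ ?_) (fun i j hij ↦ ?_) fun i j hij ↦ ?_
    all_goals
      have hi := i.val_lt
      have hj := j.val_lt
      have hval := hinj (by omega) (by omega) hij
    exacts [ZMod.val_injective m (by omega), ZMod.val_injective m (by omega), by omega]
  ground_eq := by
    rw [← hbij.image_eq]
    refine subset_antisymm ?_ (union_subset ?_ ?_)
    · rintro _ ⟨k, hk, rfl⟩
      rw [mem_Ico] at hk
      obtain ⟨l, rfl | rfl⟩ := k.even_or_odd'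
      all_goals
        have hval : ((l : ℕ) : ZMod m).val = l := ZMod.val_natCast_of_lt (by omega)
      exacts [.inl ⟨l, by simp only [hval]⟩, .inr ⟨l, by simp only [hval]⟩]
    · rintro _ ⟨i, rfl⟩
      exact mem_image_of_mem f ⟨Nat.zero_le _, by have := i.val_lt; omega⟩
    · rintro _ ⟨i, rfl⟩
      exact mem_image_of_mem f ⟨Nat.zero_le _, by have := i.val_lt; omega⟩
  isCircuit i := by
    rw [two_mul_val_add_one_of_periodic hper]
    exact htri _ (even_two_mul _)
  isCocircuit i := by
    have hper' : Function.Periodic (fun k ↦ f (k + 1)) (2 * m) := fun k ↦ by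
      simpa only [add_right_comm k] using hper (k + 1)
    rw [two_mul_val_add_one_of_periodic hper, two_mul_val_add_one_of_periodic hper']
    exact htriad _ (odd_two_mul_add_one _)

end Periodic

namespace IsFanOn

variable {M : Matroid α} {p : ℕ} {e : ℕ → α} {a c L : ℕ}

lemma eRank_le_of_encard_sdiff_eq_two (h : IsFanOn M p e a c) (hM : ∀ X Y, ¬ TwoSep M X Y)
    (hF : 2 ≤ (e '' Ico a c).encard) (hX : (M.E \ e '' Ico a c).encard = 2) :
    M.eRank ≤ (rim p e a c).encard + 1 := by
  refine (ENat.add_le_add_iff_right ENat.one_ne_top).1 ?_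
  calc M.eRank + 1 ≤ M.eRk (rim p e a c) + M.eRk (M.E \ e '' Ico a c) :=
        h.eRank_add_one_le hM hF hX.ge
    _ ≤ (rim p e a c).encard + (M.E \ e '' Ico a c).encard :=
        add_le_add (M.eRk_le_encard _) (M.eRk_le_encard _)
    _ = (rim p e a c).encard + 1 + 1 := by rw [hX, add_assoc, one_add_one_eq_two]

lemma eRank_eq_of_encard_sdiff_eq_two [M.Finite] (h : IsFanOn M p e a c)
    (hM : ∀ X Y, ¬ TwoSep M X Y) (hF : 2 ≤ (e '' Ico a c).encard)
    (hX : (M.E \ e '' Ico a c).encard = 2) : M.eRank = (rim p e a c).encard + 1 := by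
  have hle := h.eRank_le_of_encard_sdiff_eq_two hM hF hX
  have hle' := h.dual.eRank_le_of_encard_sdiff_eq_two (fun X Y hXY ↦ hM X Y hXY.of_dual) hF hX
  refine hle.antisymm ((ENat.add_le_add_iff_right (M✶.eRank_ne_top_iff.2 inferInstance)).1 ?_)
  calc (rim p e a c).encard + 1 + M✶.eRank
      ≤ (rim p e a c).encard + 1 + ((rim (p + 1) e a c).encard + 1) := by gcongr
    _ = (M.E \ e '' Ico a c).encard + (e '' Ico a c).encard := by
        rw [hX, ← rim_union_rim_add_one (p := p), encard_union_eq (disjoint_rim h.injOn),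
          ← one_add_one_eq_two]
        ring
    _ = M.eRank + M✶.eRank := by
        rw [encard_sdiff_add_encard_of_subset h.image_subset_ground, M.eRank_add_eRank_dual]

lemma isCircuit_sdiff_of_encard_eq_three (h : IsFanOn M p e a c) (hM : ∀ X Y, ¬ TwoSep M X Y)
    (hcard : 4 ≤ M.E.encard) (hX : (M.E \ e '' Ico a c).encard = 3)
    (hr : M.eRank ≤ (rim p e a c).encard + 1) : M.IsCircuit (M.E \ e '' Ico a c) := by
  refine isCircuit_of_encard_eq_three hM hcard sdiff_subset hX ?_
  have hfin : (rim p e a c).encard ≠ ⊤ := by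
    rw [encard_rim h.injOn]; exact ENat.natCast_ne_top _
  refine (ENat.add_le_add_iff_right hfin).1 ?_
  calc M.eRk (M.E \ e '' Ico a c) + (rim p e a c).encard ≤ M.eRank + 1 :=
        h.eRk_sdiff_add_encard_rim_le
    _ ≤ (rim p e a c).encard + 1 + 1 := by gcongr
    _ = 2 + (rim p e a c).encard := by rw [← one_add_one_eq_two]; ring

lemma even_and_eRank_eq_of_periodic [M.Finite] (h : IsFanOn M p e 1 L) (hM : ∀ X Y, ¬ TwoSep M X Y)
    (hL : 4 ≤ L) (hper : Function.Periodic e L) (hbij : BijOn e (Ico 0 L) M.E) :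
    Even L ∧ M.eRank = (L / 2 : ℕ) := by
  have hrank {a c : ℕ} (ha : 1 ≤ a) (hc : c ≤ L) (hac : c + 2 = a + L) :
      M.eRank = ((c + p) / 2 - (a + p) / 2 + 1 : ℕ) := by
    have hw := h.mono ha hc
    have hF : 2 ≤ (e '' Ico a c).encard := by
      rw [encard_image_Ico hw.injOn]
      exact_mod_cast (by omega : 2 ≤ c - a)
    have hX : (M.E \ e '' Ico a c).encard = 2 := by
      rw [encard_sdiff_image_Ico_of_periodic hper hbij (by omega) (by omega),
        show a + L - c = 2 by omega, Nat.cast_ofNat]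
    rw [hw.eRank_eq_of_encard_sdiff_eq_two hM hF hX, encard_rim hw.injOn,
      Nat.cast_succ]
  -- The subfans missing `e 0` and one of its two neighbours have equally many rim elements.
  have h₁ := hrank (a := 1) (c := L - 1) le_rfl (by omega) (by omega)
  have h₂ := hrank (a := 2) (c := L) (by omega) le_rfl (by omega)
  have h₁₂ := Nat.cast_inj.1 (h₁.symm.trans h₂)
  have hLeven : L % 2 = 0 := by omega
  exact ⟨Nat.even_iff.2 hLeven, h₁.trans (congrArg _ (by omega))⟩

lemma isCircuit_of_periodic_of_le [M.Finite] (h : IsFanOn M p e 1 L) (hM : ∀ X Y, ¬ TwoSep M X Y)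
    (hL : 4 ≤ L) (hper : Function.Periodic e L) (hbij : BijOn e (Ico 0 L) M.E) {i : ℕ}
    (hi₁ : 1 ≤ i) (hiL : i ≤ L) (hi : Even (i + p)) : M.IsCircuit {e i, e (i + 1), e (i + 2)} := by
  obtain hlt | hle := lt_or_ge (i + 2) L
  · exact h.isCircuit i hi₁ hlt hi
  -- The triples that are not in the fan are complements of subfans with `L - 3` elements.
  have hw := h.mono (a' := i + 3 - L) (c' := i) (by omega) hiL
  have hcompl : M.E \ e '' Ico (i + 3 - L) i = {e i, e (i + 1), e (i + 2)} := by
    have hIco : Ico i (i + 3) = {i, i + 1, i + 2} := by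
      ext k; simp only [mem_Ico, mem_insert_iff, mem_singleton_iff]; omega
    rw [sdiff_image_Ico_of_periodic hper hbij (by omega) (by omega),
      show i + 3 - L + L = i + 3 by omega, hIco, image_insert_eq, image_pair]
  have hcard : 4 ≤ M.E.encard := by
    rw [← hbij.image_eq, encard_image_Ico hbij.injOn]
    exact_mod_cast hL
  obtain ⟨hLeven, hr⟩ := h.even_and_eRank_eq_of_periodic hM hL hper hbij
  rw [← hcompl]
  refine hw.isCircuit_sdiff_of_encard_eq_three hM hcard ?_ ?_
  · rw [encard_sdiff_image_Ico_of_periodic hper hbij (by omega) (by omega),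
      show i + 3 - L + L - i = 3 by omega, Nat.cast_ofNat]
  · rw [Nat.even_iff] at hi hLeven
    rw [hr, encard_rim hw.injOn]
    exact_mod_cast (by omega : L / 2 ≤ (i + p) / 2 - (i + 3 - L + p) / 2 + 1)

lemma isCircuit_of_periodic [M.Finite] (h : IsFanOn M p e 1 L) (hM : ∀ X Y, ¬ TwoSep M X Y)
    (hL : 4 ≤ L) (hper : Function.Periodic e L) (hbij : BijOn e (Ico 0 L) M.E) (i : ℕ)
    (hi : Even (i + p)) : M.IsCircuit {e i, e (i + 1), e (i + 2)} := by
  obtain ⟨hLeven, -⟩ := h.even_and_eRank_eq_of_periodic hM hL hper hbij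
  obtain ⟨j, hj, hji⟩ := exists_mem_Ico_add_modEq (by omega : 0 < L) 1 i
  have heven : Even (j + p) :=
    Nat.even_iff.2 <| Eq.trans ((hji.add_right p).of_dvd hLeven.two_dvd) (Nat.even_iff.1 hi)
  have heq (k : ℕ) : e (j + k) = e (i + k) := eq_of_modEq_of_periodic hper (hji.add_right k)
  have hcirc := h.isCircuit_of_periodic_of_le hM hL hper hbij hj.1 (by have := hj.2; omega) heven
  rwa [heq 1, heq 2, eq_of_modEq_of_periodic hper hji] at hcirc

theorem isWheel_or_isWhirl_of_periodic [M.Finite] (h : IsFanOn M p e 1 L)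
    (hM : ∀ X Y, ¬ TwoSep M X Y) (hL : 4 ≤ L) (hper : Function.Periodic e L)
    (hbij : BijOn e (Ico 0 L) M.E) : IsWheel M ∨ IsWhirl M := by
  obtain ⟨m, rfl⟩ := even_iff_exists_two_mul.1 (h.even_and_eRank_eq_of_periodic hM hL hper hbij).1
  have : NeZero m := ⟨by omega⟩
  have hper' : Function.Periodic (fun k ↦ e (k + p)) (2 * m) := fun k ↦ by
    simpa only [add_right_comm k] using hper (k + p)
  have hbij' : BijOn (fun k ↦ e (k + p)) (Ico 0 (2 * m)) M.E := by
    have hshift : BijOn (· + p) (Ico 0 (2 * m)) (Ico p (p + 2 * m)) := by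
      rw [show Ico p (p + 2 * m) = (· + p) '' Ico 0 (2 * m) by
        rw [image_add_const_Ico, zero_add, add_comm]]
      exact (add_left_injective p).injOn.bijOn_image
    exact (bijOn_Ico_add_of_periodic hper hbij p).comp hshift
  refine (isCyclicFan_of_periodic hper' hbij' (fun k hk ↦ ?_) fun k hk ↦ ?_).isWheel_or_isWhirl
    (by omega)
  · rw [add_right_comm, add_right_comm k 2]
    exact h.isCircuit_of_periodic hM hL hper hbij (k + p)
      (by rw [add_assoc]; exact hk.add ⟨p, rfl⟩)
  · rw [add_right_comm, add_right_comm k 2]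
    exact h.dual.isCircuit_of_periodic (fun X Y hXY ↦ hM X Y hXY.of_dual) hL hper hbij (k + p)
      (by rw [← add_assoc, add_assoc k]; exact (hk.add_even ⟨p, rfl⟩).add_one)

lemma isWheel_or_isWhirl_of_ground_eq_insert (h : IsFanOn M p e 1 L)
    (hM : ∀ X Y, ¬ TwoSep M X Y) (hcard : 4 ≤ M.E.encard) {x : α} (hx : x ∉ e '' Ico 1 L)
    (hE : M.E = insert x (e '' Ico 1 L)) : IsWheel M ∨ IsWhirl M := by
  have : M.Finite := ⟨hE ▸ ((finite_Ico 1 L).image e).insert x⟩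
  have hL : 4 ≤ L := by
    rw [hE, encard_insert_of_notMem hx, encard_image_Ico h.injOn] at hcard
    have : 4 ≤ L - 1 + 1 := by exact_mod_cast hcard
    omega
  have hIco : Ico 0 L = insert 0 (Ico 1 L) := by
    ext i; simp only [mem_Ico, mem_insert_iff]; omega
  set f : ℕ → α := fun i ↦ Function.update e 0 x (i % L) with hf
  have hper : Function.Periodic f L := fun i ↦ by simp only [hf, Nat.add_mod_right]
  have hef : EqOn e f (Ico 1 L) := fun i hi ↦ by
    simp only [hf, Nat.mod_eq_of_lt hi.2, Function.update_of_ne (Nat.one_le_iff_ne_zero.1 hi.1)]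
  have hf₀ : f 0 = x := by simp only [hf, Nat.zero_mod, Function.update_self]
  have hbij : BijOn f (Ico 0 L) M.E := by
    rw [hIco, hE, ← hf₀]
    exact (h.injOn.bijOn_image.congr hef).insert (hf₀ ▸ hx)
  exact (h.congr hef).isWheel_or_isWhirl_of_periodic hM hL hper hbij

theorem isWheel_or_isWhirl (h : IsFanOn M p e 1 L) (hL : 2 ≤ L) (hM : ∀ X Y, ¬ TwoSep M X Y)
    (hcard : 4 ≤ M.E.encard) (hX : (M.E \ e '' Ico 1 L).encard ≤ 1) : IsWheel M ∨ IsWhirl M := by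
  obtain hX | ⟨x, hX⟩ := encard_le_one_iff_eq.1 hX
  · have hE : M.E = e '' Ico 1 L := (sdiff_eq_empty.1 hX).antisymm h.image_subset_ground
    obtain ⟨n, rfl⟩ : ∃ n, L = n + 1 := ⟨L - 1, by omega⟩
    have hIco : Ico 1 (n + 1) = insert n (Ico 1 n) := by
      ext i; simp only [mem_Ico, mem_insert_iff]; omega
    have hn : e n ∉ e '' Ico 1 n := fun hmem ↦
      lt_irrefl n ((h.injOn.mem_image_iff (Ico_subset_Ico_right n.le_succ)
        ⟨by omega, n.lt_succ_self⟩).1 hmem).2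
    exact (h.mono le_rfl n.le_succ).isWheel_or_isWhirl_of_ground_eq_insert hM hcard hn
      (by rw [hE, hIco, image_insert_eq])
  · have hx : x ∈ M.E \ e '' Ico 1 L := hX ▸ mem_singleton x
    exact h.isWheel_or_isWhirl_of_ground_eq_insert hM hcard hx.2
      (by rw [← singleton_union, ← hX, sdiff_union_of_subset h.image_subset_ground])

end IsFanOn

section IsFanFun

variable {b : Bool} {n i : ℕ} {e : ℕ → α}

lemma posBool_eq_true_iff : posBool b i = true ↔ Even (i + b.toNat) := by
  rw [posBool, Nat.even_iff]
  cases b <;> simp only [Bool.toNat_true, Bool.toNat_false] <;> split_ifs <;> simp <;> omega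

lemma posBool_eq_false_iff : posBool b i = false ↔ Odd (i + b.toNat) := by
  rw [← Bool.not_eq_true, posBool_eq_true_iff, Nat.not_even_iff_odd]

lemma fanSet_eq_image_Ico : fanSet n e = e '' Ico 1 (n + 1) := by
  ext x
  simp only [fanSet, mem_ofPred_eq, mem_image, mem_Ico, Nat.lt_succ_iff, and_assoc, eq_comm]

lemma rimSet_eq_rim : rimSet b n e = rim b.toNat e 1 (n + 1) := by
  ext x
  simp only [rimSet, rim, mem_ofPred_eq, mem_image, mem_Ico, Nat.lt_succ_iff, and_assoc,
    posBool_eq_false_iff, @eq_comm _ x]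

lemma IsFanFun.isFanOn {M : Matroid α} (h : IsFanFun M b n e) :
    IsFanOn M b.toNat e 1 (n + 1) where
  injOn i hi j hj := h.2.1 i j hi.1 (Nat.lt_succ_iff.1 hi.2) hj.1 (Nat.lt_succ_iff.1 hj.2)
  mapsTo i hi := h.2.2.1 i hi.1 (Nat.lt_succ_iff.1 hi.2)
  isCircuit i hi hin heven := by
    have htri := h.2.2.2 i hi (Nat.lt_succ_iff.1 hin)
    rw [posBool_eq_true_iff.2 heven] at htri
    exact isCircuit_iff_isCircuit.1 htri.1
  isCocircuit i hi hin hodd := by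
    have htriad := h.2.2.2 i hi (Nat.lt_succ_iff.1 hin)
    rw [posBool_eq_false_iff.2 hodd] at htriad
    exact isCircuit_iff_isCircuit.1 htriad.1

end IsFanFun

end PaperDefs

theorem statement7_general (N : Matroid α) (hN : ∀ X Y, ¬ TwoSep N X Y)
    (hNcard : 4 ≤ N.E.encard) (hNwheel : ¬ IsWheel N) (hNwhirl : ¬ IsWhirl N)
    (b : Bool) (n : ℕ) (e : ℕ → α) (hfan : IsFanFun N b n e) :
    erk N (rimSet b n e) + erk N (N.E \ fanSet n e)
      = erk N (rimSet b n e ∪ (N.E \ fanSet n e)) + 1 := by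
  have hF := hfan.isFanOn
  have hn : 3 ≤ n := hfan.1
  simp only [erk_eq_eRk, fanSet_eq_image_Ico, rimSet_eq_rim]
  obtain hX | hX := le_or_gt 2 (N.E \ e '' Ico 1 (n + 1)).encard
  · refine hF.eRk_rim_add_eRk_sdiff hN ?_ hX
    rw [encard_image_Ico hF.injOn]
    exact_mod_cast (by omega : 2 ≤ n + 1 - 1)
  · exact ((hF.isWheel_or_isWhirl (by omega) hN hNcard (Order.le_of_lt_add_one hX)).elim
      hNwheel hNwhirl).elim

/-- If `F = (e 1, ..., e n)` is a fan of the representable 3-connected matroid `N`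
(which is neither a wheel nor a whirl and has at least four elements) and `R` is the set
of rim elements of `F`, then the local connectivity between `R` and `E - F` is one. -/
theorem statement7 (N : Matroid α) (hN3 : ThreeConn N)
    (𝔽 : Type*) [Field 𝔽] (hrep : RepOver N 𝔽)
    (hNcard : 4 ≤ N.E.encard) (hNwheel : ¬ IsWheel N) (hNwhirl : ¬ IsWhirl N)
    (b : Bool) (n : ℕ) (e : ℕ → α) (hfan : IsFanFun N b n e) :
    erk N (rimSet b n e) + erk N (N.E \ fanSet n e)
      = erk N (rimSet b n e ∪ (N.E \ fanSet n e)) + 1 :=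
  statement7_general N hN3.2 hNcard hNwheel hNwhirl b n e hfan
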